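/- arXiv:1308.6817 — 3 statements merged into one kernel-verified Lean document; each statement's English description precedes it below -/
import Mathlib

section
/- Let f : Mₙ(ℂ) → ℂ be a continuous function on the space of n×n complex matrices. Then ∫_{U(n)} f(U) dH(U) = lim_{ε→0⁺} ( ∫_{{X : ‖X*X − I‖ < ε}} f(X) dX ) / ( ∫_{{X : ‖X*X − I‖ < ε}} dX ), where H is the Haar probability measure on the unitary group U(n), ‖·‖ is the Frobenius norm, and dX denotes Lebesgue measure on Mₙ(ℂ) ≅ ℝ^{2n²} (the sets {X : ‖X*X − I‖ < ε} have finite positive Lebesgue measure for small ε > 0). -/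
/-!
A set `A` of the form `{X | ‖Xᴴ * X - 1‖ < ε}` is unchanged by right multiplication by a unitary
matrix `V`; since `A` has finite positive volume, that multiplication preserves Lebesgue measure.
Averaging over `V` shows that the mean of `f` over `A` equals the mean over `A` of
`F X = ∫ f (X * V) dμ(V)`. By left invariance of `μ`, the continuous function `F` is equal to
`∫ f dμ` at every unitary matrix, and by compactness the sets `A` shrink to the unitary group as
`ε → 0`, so the means converge to that value.
-/

open MeasureTheory Filter Matrix

noncomputable section

/-- `μ` is the Haar probability measure of the unitary group `U(n)`, viewed as a measure on
the space of `n × n` complex matrices: a probability measure carried by the set of unitary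
matrices and invariant under left multiplication by every unitary matrix. -/
def IsHaarUnitary (n : ℕ) (μ : Measure (Fin n → Fin n → ℂ)) : Prop :=
  IsProbabilityMeasure μ ∧
    μ {U | Matrix.of U ∈ Matrix.unitaryGroup (Fin n) ℂ} = 1 ∧
    ∀ V ∈ Matrix.unitaryGroup (Fin n) ℂ,
      Measure.map (fun U => fun i j => (V * Matrix.of U) i j) μ = μ

/-- The Frobenius norm `‖M‖ = √(tr (M* M))` of an `n × n` complex matrix. -/
def frobNorm (n : ℕ) (M : Matrix (Fin n) (Fin n) ℂ) : ℝ :=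
  Real.sqrt (Matrix.trace (Mᴴ * M)).re

open scoped Topology Matrix.Norms.Frobenius

section Concentration

variable {X α : Type*} [TopologicalSpace X]

lemma tendsto_sublevel_smallSets_nhdsSet [LinearOrder α] [TopologicalSpace α] [OrderTopology α]
    [NoMaxOrder α] {g : X → α} (hg : Continuous g) {a b : α} (hab : a < b)
    (hK : IsCompact {x | g x ≤ b}) :
    Tendsto (fun ε => {x | g x < ε}) (𝓝[>] a) (𝓝ˢ {x | g x ≤ a}).smallSets := by
  rw [tendsto_smallSets_iff]
  intro t ht
  obtain ⟨U, hU, haU, hUt⟩ := mem_nhdsSet_iff_exists.mp ht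
  obtain ⟨a', ha', hga'⟩ := (hK.diff hU).exists_forall_le' hg.continuousOn
    fun x hx => not_le.mp fun hxa => hx.2 (haU hxa)
  filter_upwards [Ioo_mem_nhdsGT (lt_min ha' hab)] with ε hε x (hx : g x < ε)
  obtain ⟨hxa', hxb⟩ := lt_min_iff.mp (hx.trans hε.2)
  by_contra hxt
  exact (hga' x ⟨hxb.le, fun hxU => hxt (hUt hxU)⟩).not_gt hxa'

instance nhdsSet_isMeasurablyGenerated [MeasurableSpace X] [OpensMeasurableSpace X] (s : Set X) :
    (𝓝ˢ s).IsMeasurablyGenerated where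
  exists_measurable_subset _ ht :=
    let ⟨U, hU, hsU, hUt⟩ := mem_nhdsSet_iff_exists.mp ht
    ⟨U, hU.mem_nhdsSet.mpr hsU, hU.measurableSet, hUt⟩

lemma tendsto_setAverage_of_tendsto_smallSets {Y ι E : Type*} [MeasurableSpace Y]
    [NormedAddCommGroup E] [NormedSpace ℝ E] [CompleteSpace E] {ν : Measure Y} {m : Filter Y}
    [m.IsMeasurablyGenerated] {f : Y → E} {c : E} (hf : Tendsto f m (𝓝 c))
    (hfm : StronglyMeasurableAtFilter f m ν) (hν : ν.FiniteAtFilter m) {A : ι → Set Y}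
    {l : Filter ι} (hA : Tendsto A l m.smallSets) (hA₀ : ∀ᶠ i in l, ν (A i) ≠ 0) :
    Tendsto (fun i => ⨍ x in A i, f x ∂ν) l (𝓝 c) := by
  have herror := ((hf.mono_left inf_le_left).integral_sub_linear_isLittleO_ae hfm hν
    hA).tendsto_inv_smul_nhds_zero
  rw [tendsto_iff_norm_sub_tendsto_zero]
  refine herror.norm.congr' ?_ |>.trans (by simp)
  filter_upwards [hA₀, hA.eventually hν.eventually] with i h₀ hfin
  have hreal : ν.real (A i) ≠ 0 := (measureReal_ne_zero_iff hfin.ne).mpr h₀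
  rw [setAverage_eq, smul_sub, inv_smul_smul₀ hreal]

end Concentration

section HaarAverage

variable {M : Type*} [Monoid M] [MeasurableSpace M]

lemma mconv_eq_self_of_map_mul_right_eq_self [MeasurableMul₂ M] {ρ μ : Measure M} [SFinite ρ]
    [IsProbabilityMeasure μ] (h : ∀ᵐ k ∂μ, ρ.map (· * k) = ρ) : ρ ∗ₘ μ = ρ := by
  ext s hs
  have hs' : MeasurableSet ((fun p : M × M => p.1 * p.2) ⁻¹' s) := measurable_mul hs
  calc (ρ ∗ₘ μ) s = ∫⁻ k, ρ ((· * k) ⁻¹' s) ∂μ := by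
        rw [Measure.mconv, Measure.map_apply measurable_mul hs, Measure.prod_apply_symm hs']
        rfl
    _ = ∫⁻ _, ρ s ∂μ := lintegral_congr_ae <| h.mono fun k hk => by
        simp only
        rw [← Measure.map_apply (measurable_mul_const k) hs, hk]
    _ = ρ s := by simp

variable [TopologicalSpace M] [ContinuousMul M] [BorelSpace M] [SecondCountableTopology M]
  {E : Type*} [NormedAddCommGroup E] [NormedSpace ℝ E] {K : Set M} {μ ν : Measure M} {f : M → E}

lemma continuous_integral_mul_right [LocallyCompactSpace M] [IsFiniteMeasure μ]
    (hK : IsCompact K) (hμK : ∀ᵐ k ∂μ, k ∈ K) (hf : Continuous f) :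
    Continuous fun x => ∫ k, f (x * k) ∂μ := by
  rw [← Measure.restrict_eq_self_of_ae_mem hμK]
  exact continuous_parametric_integral_of_continuous (f := fun x k => f (x * k))
    (hf.comp continuous_mul) hK

lemma tendsto_integral_mul_right_nhdsSet [LocallyCompactSpace M] [IsFiniteMeasure μ]
    (hK : IsCompact K) (hμK : ∀ᵐ k ∂μ, k ∈ K) (hμ : ∀ k ∈ K, μ.map (k * ·) = μ)
    (hf : Continuous f) :
    Tendsto (fun x => ∫ k, f (x * k) ∂μ) (𝓝ˢ K) (𝓝 (∫ k, f k ∂μ)) := by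
  refine (continuous_integral_mul_right hK hμK hf).tendsto_nhdsSet_nhds fun x hx => ?_
  conv_rhs => rw [← hμ x hx]
  exact (integral_map (measurable_const_mul x).aemeasurable hf.aestronglyMeasurable).symm

theorem tendsto_setAverage_integral_of_map_mul_right_eq_self [LocallyCompactSpace M]
    [CompleteSpace E] [IsProbabilityMeasure μ] [IsLocallyFiniteMeasure ν]
    (hK : IsCompact K) (hμK : ∀ᵐ k ∂μ, k ∈ K) (hμ : ∀ k ∈ K, μ.map (k * ·) = μ)
    (hf : Continuous f) {ι : Type*} {A : ι → Set M} {l : Filter ι}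
    (hA : Tendsto A l (𝓝ˢ K).smallSets) (hA₀ : ∀ᶠ i in l, ν (A i) ≠ 0)
    (hAK : ∀ᶠ i in l, ∀ k ∈ K, (ν.restrict (A i)).map (· * k) = ν.restrict (A i)) :
    Tendsto (fun i => ⨍ x in A i, f x ∂ν) l (𝓝 (∫ k, f k ∂μ)) := by
  obtain ⟨U, hU, hKU, hfU⟩ := (hf.locallyIntegrable (μ := ν)).integrableOn_nhds_isCompact hK
  obtain ⟨W, hKW, hW, hWfin⟩ := hK.exists_open_superset_measure_lt_top ν
  have hAU : ∀ᶠ i in l, A i ⊆ U := tendsto_smallSets_iff.mp hA U (hU.mem_nhdsSet.mpr hKU)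
  have haverage : (fun i => ⨍ x in A i, f x ∂ν) =ᶠ[l]
      fun i => ⨍ x in A i, ∫ k, f (x * k) ∂μ ∂ν := by
    filter_upwards [hAU, hAK] with i hiU hiK
    have hconv : ν.restrict (A i) ∗ₘ μ = ν.restrict (A i) :=
      mconv_eq_self_of_map_mul_right_eq_self (hμK.mono hiK)
    rw [setAverage_eq, setAverage_eq, ← integral_mconv (by rw [hconv]; exact hfU.mono_set hiU),
      hconv]
  refine (tendsto_congr' haverage).mpr ?_
  exact tendsto_setAverage_of_tendsto_smallSets
    (tendsto_integral_mul_right_nhdsSet hK hμK hμ hf)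
    (continuous_integral_mul_right hK hμK hf).aestronglyMeasurable.stronglyMeasurableAtFilter
    ⟨W, hW.mem_nhdsSet.mpr hKW, hWfin⟩ hA hA₀

end HaarAverage

section HaarPreserving

lemma measurePreserving_of_preimage_eq {A : Type*} [AddGroup A] [TopologicalSpace A]
    [IsTopologicalAddGroup A] [LocallyCompactSpace A] [MeasurableSpace A] [BorelSpace A]
    {ν : Measure A} [ν.IsAddHaarMeasure] [ν.Regular] (φ : A ≃ₜ+ A) {s : Set A}
    (hs₀ : ν s ≠ 0) (hs : ν s ≠ ⊤) (hφ : φ ⁻¹' s = s) : MeasurePreserving φ ν ν := by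
  have hscale := addEquivAddHaarChar_smul_preimage ν (X := s) φ
  have hone : addEquivAddHaarChar φ = 1 := by
    rw [hφ, ENNReal.smul_def, smul_eq_mul, ENNReal.mul_eq_right hs₀ hs] at hscale
    exact_mod_cast hscale
  refine ⟨φ.continuous.measurable, ?_⟩
  simpa only [hone, one_smul] using addEquivAddHaarChar_smul_map ν φ

lemma measurePreserving_mul_right_of_preimage_eq {R : Type*} [Ring R] [TopologicalSpace R]
    [IsTopologicalRing R] [LocallyCompactSpace R] [MeasurableSpace R] [BorelSpace R]
    {ν : Measure R} [ν.IsAddHaarMeasure] [ν.Regular] (u : Rˣ) {s : Set R}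
    (hs₀ : ν s ≠ 0) (hs : ν s ≠ ⊤) (hu : (· * (u : R)) ⁻¹' s = s) :
    MeasurePreserving (· * (u : R)) ν ν :=
  measurePreserving_of_preimage_eq
    { AddEquiv.mk' u.mulRight fun x y => add_mul x y u with
      continuous_toFun := continuous_mul_const (u : R)
      continuous_invFun := continuous_mul_const (↑u⁻¹ : R) } hs₀ hs hu

end HaarPreserving

section MatrixInstances

variable {m n α : Type*}

instance matrix_locallyCompactSpace [TopologicalSpace α] [Finite m] [Finite n]
    [LocallyCompactSpace α] : LocallyCompactSpace (Matrix m n α) :=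
  inferInstanceAs (LocallyCompactSpace (m → n → α))

instance matrix_secondCountableTopology [TopologicalSpace α] [Finite m] [Finite n]
    [SecondCountableTopology α] : SecondCountableTopology (Matrix m n α) :=
  inferInstanceAs (SecondCountableTopology (m → n → α))

/-- The product measure of the entries, on the product σ-algebra: for `ℂ` this is Lebesgue measure,
definitionally equal to `volume` on `m → n → ℂ`. -/
instance matrixMeasureSpace [Fintype m] [Fintype n] [MeasureSpace α] :
    MeasureSpace (Matrix m n α) :=
  inferInstanceAs (MeasureSpace (m → n → α))

instance matrix_borelSpace [Fintype m] [Fintype n] [TopologicalSpace α]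
    [SecondCountableTopology α] [MeasureSpace α] [BorelSpace α] : BorelSpace (Matrix m n α) :=
  inferInstanceAs (BorelSpace (m → n → α))

instance matrix_isAddHaarMeasure_volume [Fintype m] [Fintype n] [AddGroup α]
    [TopologicalSpace α] [MeasureSpace α] [SigmaFinite (volume : Measure α)] [MeasurableAdd α]
    [(volume : Measure α).IsAddHaarMeasure] : (volume : Measure (Matrix m n α)).IsAddHaarMeasure :=
  have : (volume : Measure (n → α)).IsAddHaarMeasure := Measure.pi.isAddHaarMeasure _
  Measure.pi.isAddHaarMeasure _

end MatrixInstances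

section FrobeniusNorm

variable {m n 𝕜 : Type*} [Fintype m] [Fintype n] [RCLike 𝕜]

lemma frobenius_norm_sq_eq_re_trace (A : Matrix m n 𝕜) :
    ‖A‖ ^ 2 = RCLike.re (Aᴴ * A).trace := by
  rw [frobenius_norm_def, ← Real.sqrt_eq_rpow, Real.sq_sqrt (by positivity), Finset.sum_comm]
  simp only [trace, diag_apply, mul_apply, conjTranspose_apply, RCLike.star_def, RCLike.conj_mul,
    map_sum, Real.rpow_two]
  norm_cast

lemma norm_entry_le_frobenius_norm {α : Type*} [SeminormedAddCommGroup α] (A : Matrix m n α)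
    (i : m) (j : n) : ‖A i j‖ ≤ ‖A‖ :=
  (PiLp.norm_apply_le (WithLp.toLp 2 (A i)) j).trans
    (PiLp.norm_apply_le (WithLp.toLp 2 fun i => WithLp.toLp 2 (A i)) i)

lemma frobenius_norm_conj [DecidableEq n] {V : Matrix n n 𝕜} (hV : V ∈ unitaryGroup n 𝕜)
    (A : Matrix n n 𝕜) : ‖Vᴴ * A * V‖ = ‖A‖ := by
  have hVV : V * Vᴴ = 1 := mem_unitaryGroup_iff.mp hV
  refine (sq_eq_sq₀ (norm_nonneg _) (norm_nonneg _)).mp ?_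
  rw [frobenius_norm_sq_eq_re_trace, frobenius_norm_sq_eq_re_trace]
  congr 1
  calc ((Vᴴ * A * V)ᴴ * (Vᴴ * A * V)).trace = (Vᴴ * (Aᴴ * (V * Vᴴ) * A * V)).trace := by
        simp only [conjTranspose_mul, conjTranspose_conjTranspose, Matrix.mul_assoc]
    _ = (Aᴴ * A * (V * Vᴴ)).trace := by
        rw [trace_mul_comm, hVV, Matrix.mul_one, Matrix.mul_assoc, hVV]
    _ = (Aᴴ * A).trace := by rw [hVV, Matrix.mul_one]

end FrobeniusNorm

section UnitarityDefect

variable {ι 𝕜 : Type*} [Fintype ι] [DecidableEq ι] [RCLike 𝕜]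

/-- The Frobenius distance of `Xᴴ * X` from the identity; the unitary group is its zero set, and
the neighbourhoods of the theorem are its strict sublevel sets. -/
def unitarityDefect (X : Matrix ι ι 𝕜) : ℝ := ‖Xᴴ * X - 1‖

lemma continuous_unitarityDefect : Continuous (unitarityDefect : Matrix ι ι 𝕜 → ℝ) :=
  continuous_norm.comp ((continuous_id.matrix_conjTranspose.mul continuous_id).sub continuous_const)

lemma unitarityDefect_le_zero_iff {X : Matrix ι ι 𝕜} :
    unitarityDefect X ≤ 0 ↔ X ∈ unitaryGroup ι 𝕜 := by
  rw [unitarityDefect, norm_le_zero_iff, sub_eq_zero, mem_unitaryGroup_iff', star_eq_conjTranspose]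

lemma unitarityDefect_mul_right {V : Matrix ι ι 𝕜} (hV : V ∈ unitaryGroup ι 𝕜)
    (X : Matrix ι ι 𝕜) : unitarityDefect (X * V) = unitarityDefect X := by
  have hVV : Vᴴ * V = 1 := mem_unitaryGroup_iff'.mp hV
  have hconj : (X * V)ᴴ * (X * V) - 1 = Vᴴ * (Xᴴ * X - 1) * V := by
    rw [Matrix.mul_sub, Matrix.sub_mul, Matrix.mul_one, hVV, conjTranspose_mul]
    simp only [Matrix.mul_assoc]
  rw [unitarityDefect, hconj, frobenius_norm_conj hV, unitarityDefect]

lemma norm_entry_sq_le_unitarityDefect (X : Matrix ι ι 𝕜) (i j : ι) :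
    ‖X i j‖ ^ 2 ≤ unitarityDefect X + 1 := by
  have hdiag : (Xᴴ * X - 1) j j = ((∑ k, ‖X k j‖ ^ 2 - 1 : ℝ) : 𝕜) := by
    simp [mul_apply, RCLike.conj_mul]
  calc ‖X i j‖ ^ 2 ≤ ∑ k, ‖X k j‖ ^ 2 :=
        Finset.single_le_sum (f := fun k => ‖X k j‖ ^ 2) (fun _ _ => by positivity)
          (Finset.mem_univ i)
    _ = (∑ k, ‖X k j‖ ^ 2 - 1) + 1 := by ring
    _ ≤ ‖(Xᴴ * X - 1) j j‖ + 1 := by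
        rw [hdiag, RCLike.norm_ofReal]; gcongr; exact le_abs_self _
    _ ≤ unitarityDefect X + 1 := by gcongr; exact norm_entry_le_frobenius_norm _ j j

lemma isCompact_unitarityDefect_le (r : ℝ) :
    IsCompact {X : Matrix ι ι 𝕜 | unitarityDefect X ≤ r} := by
  have hbox : IsCompact (Set.univ.pi fun _ => Set.univ.pi fun _ =>
      Metric.closedBall 0 √(r + 1) : Set (ι → ι → 𝕜)) :=
    isCompact_univ_pi fun _ => isCompact_univ_pi fun _ => isCompact_closedBall _ _
  refine hbox.of_isClosed_subset (isClosed_le continuous_unitarityDefect continuous_const) ?_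
  intro X (hX : unitarityDefect X ≤ r) i _ j _
  rw [mem_closedBall_zero_iff]
  exact Real.le_sqrt_of_sq_le ((norm_entry_sq_le_unitarityDefect X i j).trans (by gcongr))

lemma isOpen_unitarityDefect_lt (r : ℝ) : IsOpen {X : Matrix ι ι 𝕜 | unitarityDefect X < r} :=
  isOpen_lt continuous_unitarityDefect continuous_const

variable [MeasurableSpace (Matrix ι ι 𝕜)] {ν : Measure (Matrix ι ι 𝕜)} {ε : ℝ}

lemma measure_unitarityDefect_lt_pos [ν.IsOpenPosMeasure] (hε : 0 < ε) :
    0 < ν {X | unitarityDefect X < ε} :=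
  (isOpen_unitarityDefect_lt ε).measure_pos ν
    ⟨1, (unitarityDefect_le_zero_iff.mpr (one_mem (unitaryGroup ι 𝕜))).trans_lt hε⟩

lemma measure_unitarityDefect_lt_lt_top [IsFiniteMeasureOnCompacts ν] :
    ν {X | unitarityDefect X < ε} < ⊤ :=
  (measure_mono fun X (hX : unitarityDefect X < ε) => hX.le).trans_lt
    (isCompact_unitarityDefect_le ε).measure_lt_top

variable [BorelSpace (Matrix ι ι 𝕜)]

lemma map_mul_right_restrict_unitarityDefect_lt [ν.IsAddHaarMeasure] (hε : 0 < ε)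
    {V : Matrix ι ι 𝕜} (hV : V ∈ unitaryGroup ι 𝕜) :
    (ν.restrict {X | unitarityDefect X < ε}).map (· * V) =
      ν.restrict {X | unitarityDefect X < ε} := by
  have hpre : (· * V) ⁻¹' {X | unitarityDefect X < ε} = {X | unitarityDefect X < ε} :=
    Set.ext fun X => by
      simp only [Set.mem_preimage, Set.mem_ofPred_eq, unitarityDefect_mul_right hV]
  have hmp : MeasurePreserving (· * V) ν ν :=
    measurePreserving_mul_right_of_preimage_eq (Unitary.toUnits ⟨V, hV⟩)
      (measure_unitarityDefect_lt_pos hε).ne' measure_unitarityDefect_lt_lt_top.ne hpre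
  simpa only [hpre] using
    (hmp.restrict_preimage (isOpen_unitarityDefect_lt ε).measurableSet).map_eq

theorem haar_unitary_as_limit_of_lebesgue_neighbourhoods_general [ν.IsAddHaarMeasure] {E : Type*}
    [NormedAddCommGroup E] [NormedSpace ℝ E] [CompleteSpace E] {f : Matrix ι ι 𝕜 → E}
    (hf : Continuous f) {μ : Measure (Matrix ι ι 𝕜)} (hμ₁ : IsProbabilityMeasure μ)
    (hμU : ∀ᵐ U ∂μ, U ∈ unitaryGroup ι 𝕜) (hμ : ∀ V ∈ unitaryGroup ι 𝕜, μ.map (V * ·) = μ) :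
    (∀ ε > 0, 0 < ν {X | ‖Xᴴ * X - 1‖ < ε} ∧ ν {X | ‖Xᴴ * X - 1‖ < ε} < ⊤) ∧
      Tendsto (fun ε => ⨍ X in {X | ‖Xᴴ * X - 1‖ < ε}, f X ∂ν) (𝓝[>] 0)
        (𝓝 (∫ U, f U ∂μ)) := by
  refine ⟨fun ε hε => ⟨measure_unitarityDefect_lt_pos hε, measure_unitarityDefect_lt_lt_top⟩, ?_⟩
  have hU : {X : Matrix ι ι 𝕜 | unitarityDefect X ≤ 0} = unitaryGroup ι 𝕜 :=
    Set.ext fun _ => unitarityDefect_le_zero_iff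
  have hshrink : Tendsto (fun ε => {X : Matrix ι ι 𝕜 | unitarityDefect X < ε}) (𝓝[>] 0)
      (𝓝ˢ (unitaryGroup ι 𝕜 : Set (Matrix ι ι 𝕜))).smallSets :=
    hU ▸ tendsto_sublevel_smallSets_nhdsSet continuous_unitarityDefect one_pos
      (isCompact_unitarityDefect_le 1)
  exact tendsto_setAverage_integral_of_map_mul_right_eq_self
    (hU ▸ isCompact_unitarityDefect_le 0) hμU hμ hf hshrink
    (eventually_mem_nhdsWithin.mono fun _ hε => (measure_unitarityDefect_lt_pos hε).ne')
    (eventually_mem_nhdsWithin.mono fun _ hε _ => map_mul_right_restrict_unitarityDefect_lt hε)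

end UnitarityDefect

section HaarUnitary

lemma setIntegral_div_toReal_measure {α : Type*} [MeasurableSpace α] (μ : Measure α) (s : Set α)
    (f : α → ℂ) : (∫ x in s, f x ∂μ) / ((μ s).toReal : ℂ) = ⨍ x in s, f x ∂μ := by
  rw [setAverage_eq, Complex.real_smul, Complex.ofReal_inv, inv_mul_eq_div, measureReal_def]

lemma frobNorm_eq_norm {n : ℕ} (A : Matrix (Fin n) (Fin n) ℂ) : frobNorm n A = ‖A‖ := by
  rw [frobNorm, ← RCLike.re_eq_complex_re, ← frobenius_norm_sq_eq_re_trace,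
    Real.sqrt_sq (norm_nonneg A)]

lemma IsHaarUnitary.ae_mem_unitaryGroup {n : ℕ} {μ : Measure (Fin n → Fin n → ℂ)}
    (hμ : IsHaarUnitary n μ) : ∀ᵐ U ∂μ, Matrix.of U ∈ unitaryGroup (Fin n) ℂ := by
  have := hμ.1
  have hU : IsClosed {X : Fin n → Fin n → ℂ | unitarityDefect (Matrix.of X) ≤ 0} :=
    isClosed_le continuous_unitarityDefect continuous_const
  refine (mem_ae_iff_prob_eq_one ?_).mpr hμ.2.1
  simpa only [unitarityDefect_le_zero_iff] using hU.measurableSet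

end HaarUnitary

/-- Haar integrals over `U(n)` of a continuous function are limits, as `ε → 0⁺`, of
normalized Lebesgue integrals over the neighbourhoods `{X : ‖X*X - I‖ < ε}` of the unitary
group in matrix space; moreover these neighbourhoods have finite positive Lebesgue measure
for small `ε > 0`. -/
theorem haar_unitary_as_limit_of_lebesgue_neighbourhoods
    (n : ℕ) (f : (Fin n → Fin n → ℂ) → ℂ) (hf : Continuous f)
    (μ : Measure (Fin n → Fin n → ℂ)) (hμ : IsHaarUnitary n μ) :
    (∀ᶠ ε in nhdsWithin (0 : ℝ) (Set.Ioi 0),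
      0 < volume {X : Fin n → Fin n → ℂ |
          frobNorm n ((Matrix.of X)ᴴ * Matrix.of X - 1) < ε} ∧
      volume {X : Fin n → Fin n → ℂ |
          frobNorm n ((Matrix.of X)ᴴ * Matrix.of X - 1) < ε} < ⊤) ∧
    Tendsto (fun ε : ℝ =>
        (∫ X in {X : Fin n → Fin n → ℂ |
            frobNorm n ((Matrix.of X)ᴴ * Matrix.of X - 1) < ε}, f X) /
          ((volume {X : Fin n → Fin n → ℂ |
            frobNorm n ((Matrix.of X)ᴴ * Matrix.of X - 1) < ε}).toReal : ℂ))
      (nhdsWithin (0 : ℝ) (Set.Ioi 0))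
      (nhds (∫ U, f U ∂μ)) := by
  obtain ⟨hvol, hlim⟩ := haar_unitary_as_limit_of_lebesgue_neighbourhoods_general
    (ν := volume) hf hμ.1 hμ.ae_mem_unitaryGroup hμ.2.2
  simp only [frobNorm_eq_norm, setIntegral_div_toReal_measure]
  exact ⟨eventually_mem_nhdsWithin.mono hvol, hlim⟩

end
end

section
/- For r > 0 and n ≥ 1, let F_n(r) = e^{−nr} Σ_{a=0}^{n−1} (nr)^a / a!. Then: (i) for every r with 0 < r < 1, lim_{n→∞} F_n(r) = 1; and (ii) for every r > 1, lim_{n→∞} F_n(r) = 0. Consequently, the probability measures on (0,∞) with densities r ↦ e^{−nr} Σ_{a=0}^{n−1} (nr)^a/a! · n/n (i.e., the laws of R_n/n, where R_n has density r ↦ (1/n) e^{−r} Σ_{a=0}^{n−1} r^a/a! on (0,∞)) converge weakly to the uniform distribution on [0,1] as n → ∞. -/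
/-!
Replacing `r ^ a` by `r ^ n` in the exponential series `∑ n ^ a * r ^ a / a!` (Chernoff's bound)
shows that both `F n r` for `1 ≤ r` and `1 - F n r` for `0 ≤ r ≤ 1` are at most
`(r * exp (1 - r)) ^ n`, and `r * exp (1 - r) < 1` unless `r = 1`. Hence the densities `F n`
converge almost everywhere on `(0, ∞)` to the indicator of `(0, 1]`. The same bounds give a
majorant independent of `n`, so integrals against `F n` converge by dominated convergence, and the
test function may be discontinuous and even grow exponentially.
-/

open MeasureTheory Filter

noncomputable section

/-- `F n r = e^{-nr} ∑_{a=0}^{n-1} (nr)^a / a!`, the probability that a Poisson random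
variable of mean `nr` is at most `n-1`; it is also the density of `Rₙ/n`, where `Rₙ` has
density `r ↦ (1/n) e^{-r} ∑_{a=0}^{n-1} r^a/a!` on `(0,∞)`. -/
def F (n : ℕ) (r : ℝ) : ℝ :=
  Real.exp (-(n * r)) * ∑ a ∈ Finset.range n, (n * r) ^ a / a.factorial

section PowerSeries

variable {R : Type*} [NormedRing R] [NormOneClass R] {c : ℕ → R} {z : R}

lemma norm_sum_range_mul_pow_le (hc : Summable fun a => ‖c a‖) (hz : 1 ≤ ‖z‖) (n : ℕ) :
    ‖∑ a ∈ Finset.range n, c a * z ^ a‖ ≤ (∑' a, ‖c a‖) * ‖z‖ ^ n := by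
  have hterm : ∀ a ∈ Finset.range n, ‖c a * z ^ a‖ ≤ ‖c a‖ * ‖z‖ ^ n := fun a ha =>
    calc ‖c a * z ^ a‖ ≤ ‖c a‖ * ‖z‖ ^ a := norm_mul_le_of_le le_rfl (norm_pow_le z a)
      _ ≤ ‖c a‖ * ‖z‖ ^ n := by
          gcongr ?_ * ?_; exact pow_le_pow_right₀ hz (Finset.mem_range.1 ha).le
  calc ‖∑ a ∈ Finset.range n, c a * z ^ a‖
      ≤ (∑ a ∈ Finset.range n, ‖c a‖) * ‖z‖ ^ n := by
        rw [Finset.sum_mul]; exact norm_sum_le_of_le _ hterm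
    _ ≤ (∑' a, ‖c a‖) * ‖z‖ ^ n := by
        gcongr; exact hc.sum_le_tsum _ fun a _ => norm_nonneg _

lemma norm_tsum_nat_add_mul_pow_le (hc : Summable fun a => ‖c a‖) (hz : ‖z‖ ≤ 1) (n : ℕ) :
    ‖∑' a, c (a + n) * z ^ (a + n)‖ ≤ (∑' a, ‖c a‖) * ‖z‖ ^ n := by
  have hterm (a : ℕ) : ‖c (a + n) * z ^ (a + n)‖ ≤ ‖c (a + n)‖ * ‖z‖ ^ n :=
    calc ‖c (a + n) * z ^ (a + n)‖ ≤ ‖c (a + n)‖ * ‖z‖ ^ (a + n) :=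
          norm_mul_le_of_le le_rfl (norm_pow_le z _)
      _ ≤ ‖c (a + n)‖ * ‖z‖ ^ n := by
          gcongr ?_ * ?_; exact pow_le_pow_of_le_one (norm_nonneg z) hz (Nat.le_add_left n a)
  have htail : Summable fun a => ‖c (a + n)‖ := (summable_nat_add_iff n).2 hc
  calc ‖∑' a, c (a + n) * z ^ (a + n)‖
      ≤ (∑' a, ‖c (a + n)‖) * ‖z‖ ^ n :=
        tsum_of_norm_bounded (htail.hasSum.mul_right _) hterm
    _ ≤ (∑' a, ‖c a‖) * ‖z‖ ^ n := by
        refine mul_le_mul_of_nonneg_right ?_ (by positivity)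
        rw [← hc.sum_add_tsum_nat_add n]
        exact le_add_of_nonneg_left (Finset.sum_nonneg fun a _ => norm_nonneg _)

end PowerSeries

/-- The base `e^{-I(r)}` of the Chernoff bounds on `F n r`. For `0 < r`, `I(r) = r - 1 - log r` is
the large deviation rate at which a Poisson variable of mean `n * r` takes values near `n`. -/
def chernoffFactor (r : ℝ) : ℝ := r * Real.exp (1 - r)

lemma chernoffFactor_one : chernoffFactor 1 = 1 := by simp [chernoffFactor]

lemma chernoffFactor_pos {r : ℝ} (hr : 0 < r) : 0 < chernoffFactor r :=
  mul_pos hr (Real.exp_pos _)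

@[fun_prop]
lemma continuous_chernoffFactor : Continuous chernoffFactor := by
  unfold chernoffFactor; fun_prop

lemma chernoffFactor_lt_one {r : ℝ} (hr : r ≠ 1) : chernoffFactor r < 1 :=
  calc r * Real.exp (1 - r) < Real.exp (r - 1) * Real.exp (1 - r) := by
        gcongr; linarith [Real.add_one_lt_exp (sub_ne_zero.2 hr)]
    _ = 1 := by rw [← Real.exp_add, sub_add_sub_cancel, sub_self, Real.exp_zero]

lemma chernoffFactor_le_one (r : ℝ) : chernoffFactor r ≤ 1 := by
  rcases eq_or_ne r 1 with rfl | hr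
  · exact chernoffFactor_one.le
  · exact (chernoffFactor_lt_one hr).le

lemma abs_chernoffFactor_lt_one {r : ℝ} (hr₀ : 0 < r) (hr₁ : r ≠ 1) : |chernoffFactor r| < 1 := by
  rw [abs_of_pos (chernoffFactor_pos hr₀)]
  exact chernoffFactor_lt_one hr₁

lemma exp_neg_mul_exp_mul_abs_pow (n : ℕ) (r : ℝ) :
    Real.exp (-(n * r)) * (Real.exp n * |r| ^ n) = |chernoffFactor r| ^ n := by
  rw [chernoffFactor, abs_mul, Real.abs_exp, mul_pow, ← Real.exp_nat_mul, ← mul_assoc,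
    ← Real.exp_add, mul_comm]
  ring_nf

lemma tsum_norm_pow_div_factorial {x : ℝ} (hx : 0 ≤ x) :
    ∑' a : ℕ, ‖x ^ a / a.factorial‖ = Real.exp x := by
  rw [Real.exp_eq_exp_ℝ, NormedSpace.exp_eq_tsum_div]
  exact tsum_congr fun a => Real.norm_of_nonneg (by positivity)

lemma one_sub_F_eq_exp_mul_tsum (n : ℕ) (r : ℝ) :
    1 - F n r =
      Real.exp (-(n * r)) * ∑' a : ℕ, (n * r) ^ (a + n) / (a + n).factorial := by
  have hsplit := (Real.summable_pow_div_factorial (n * r)).sum_add_tsum_nat_add n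
  rw [← congrFun NormedSpace.exp_eq_tsum_div, ← Real.exp_eq_exp_ℝ] at hsplit
  rw [F, sub_eq_iff_eq_add', ← mul_add, hsplit, ← Real.exp_add, neg_add_cancel, Real.exp_zero]

lemma abs_F_le_abs_chernoffFactor_pow (n : ℕ) {r : ℝ} (hr : 1 ≤ |r|) :
    |F n r| ≤ |chernoffFactor r| ^ n := by
  rw [F, abs_mul, Real.abs_exp, ← exp_neg_mul_exp_mul_abs_pow,
    ← tsum_norm_pow_div_factorial n.cast_nonneg]
  gcongr
  simp only [mul_pow, mul_div_right_comm]
  exact norm_sum_range_mul_pow_le (Real.summable_pow_div_factorial n).norm hr n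

lemma abs_one_sub_F_le_abs_chernoffFactor_pow (n : ℕ) {r : ℝ} (hr : |r| ≤ 1) :
    |1 - F n r| ≤ |chernoffFactor r| ^ n := by
  rw [one_sub_F_eq_exp_mul_tsum, abs_mul, Real.abs_exp, ← exp_neg_mul_exp_mul_abs_pow,
    ← tsum_norm_pow_div_factorial n.cast_nonneg]
  gcongr
  simp only [mul_pow, mul_div_right_comm]
  exact norm_tsum_nat_add_mul_pow_le (Real.summable_pow_div_factorial n).norm hr n

lemma tendsto_F_one {r : ℝ} (hr : |r| ≤ 1) (hq : |chernoffFactor r| < 1) :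
    Tendsto (fun n => F n r) atTop (nhds 1) := by
  refine tendsto_iff_norm_sub_tendsto_zero.2 (squeeze_zero (fun n => norm_nonneg _) (fun n => ?_)
    (tendsto_pow_atTop_nhds_zero_of_lt_one (abs_nonneg _) hq))
  rw [norm_sub_rev]
  exact abs_one_sub_F_le_abs_chernoffFactor_pow n hr

lemma tendsto_F_zero {r : ℝ} (hr : 1 < r) : Tendsto (fun n => F n r) atTop (nhds 0) :=
  squeeze_zero_norm (fun n => abs_F_le_abs_chernoffFactor_pow n (hr.le.trans (le_abs_self r)))
    (tendsto_pow_atTop_nhds_zero_of_lt_one (abs_nonneg _)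
      (abs_chernoffFactor_lt_one (one_pos.trans hr) hr.ne'))

lemma continuous_F (n : ℕ) : Continuous (F n) := by
  unfold F; fun_prop

lemma abs_F_le_one (n : ℕ) {r : ℝ} (hr : 0 ≤ r) : |F n r| ≤ 1 := by
  have hF : 0 ≤ F n r := by unfold F; positivity
  rw [abs_of_nonneg hF]
  calc F n r ≤ Real.exp (-(n * r)) * Real.exp (n * r) := by
        unfold F; gcongr; exact Real.sum_le_exp_of_nonneg (by positivity) n
    _ = 1 := by rw [← Real.exp_add, neg_add_cancel, Real.exp_zero]

/-- The weight `1` on `(-∞, 1]` and `chernoffFactor` on `[1, ∞)`. Its `N`-th power dominates `|F n|`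
on `[0, ∞)` for all `n ≥ N`, so its powers measure how fast a test function may grow. -/
def chernoffWeight (r : ℝ) : ℝ := chernoffFactor (max 1 r)

lemma chernoffWeight_pos (r : ℝ) : 0 < chernoffWeight r :=
  chernoffFactor_pos (one_pos.trans_le (le_max_left 1 r))

lemma continuous_chernoffWeight : Continuous chernoffWeight := by
  unfold chernoffWeight; fun_prop

lemma abs_F_le_chernoffWeight_pow {N n : ℕ} (hn : N ≤ n) {r : ℝ} (hr : 0 ≤ r) :
    |F n r| ≤ chernoffWeight r ^ N := by
  rcases le_total r 1 with hr₁ | hr₁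
  · rw [chernoffWeight, max_eq_left hr₁, chernoffFactor_one, one_pow]
    exact abs_F_le_one n hr
  · have hpos := chernoffFactor_pos (one_pos.trans_le hr₁)
    rw [chernoffWeight, max_eq_right hr₁]
    calc |F n r| ≤ |chernoffFactor r| ^ n :=
          abs_F_le_abs_chernoffFactor_pow n (hr₁.trans (le_abs_self r))
      _ = chernoffFactor r ^ n := by rw [abs_of_pos hpos]
      _ ≤ chernoffFactor r ^ N := pow_le_pow_of_le_one hpos.le (chernoffFactor_le_one r) hn

lemma integrableOn_chernoffWeight : IntegrableOn chernoffWeight (Set.Ioi 0) := by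
  have hGamma : IntegrableOn (fun r : ℝ => r * Real.exp (-r)) (Set.Ioi 0) := by
    simpa using integrableOn_rpow_mul_exp_neg_rpow (s := 1) (p := 1) (by norm_num) one_pos
  have hleft : IntegrableOn chernoffWeight (Set.Ioc 0 1) :=
    continuous_chernoffWeight.integrableOn_Icc.mono_set Set.Ioc_subset_Icc_self
  have hright : IntegrableOn chernoffWeight (Set.Ioi 1) := by
    refine IntegrableOn.congr_fun
      ((hGamma.mono_set (Set.Ioi_subset_Ioi zero_le_one)).const_mul (Real.exp 1))
      (fun r (hr : 1 < r) => ?_) measurableSet_Ioi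
    simp only [chernoffWeight, chernoffFactor, max_eq_right hr.le, sub_eq_add_neg, Real.exp_add]
    ring
  rw [← Set.Ioc_union_Ioi_eq_Ioi zero_le_one]
  exact hleft.union hright

lemma aestronglyMeasurable_of_smul {α 𝕜 E : Type*} [NormedField 𝕜] [NormedAddCommGroup E]
    [NormedSpace 𝕜 E] {m : MeasurableSpace α} {μ : Measure α} {g : α → 𝕜} {f : α → E}
    (hg : AEStronglyMeasurable g μ) (hg₀ : ∀ᵐ x ∂μ, g x ≠ 0)
    (hgf : AEStronglyMeasurable (fun x => g x • f x) μ) : AEStronglyMeasurable f μ := by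
  refine (hg.inv₀.smul hgf).congr ?_
  filter_upwards [hg₀] with x hx using inv_smul_smul₀ hx (f x)

section TestFunctions

variable {E : Type*} [NormedAddCommGroup E] [NormedSpace ℝ E]

lemma ae_tendsto_F_smul_indicator (f : ℝ → E) :
    ∀ᵐ r ∂volume.restrict (Set.Ioi (0 : ℝ)),
      Tendsto (fun n => F n r • f r) atTop (nhds ((Set.Iic 1).indicator f r)) := by
  have hne : ∀ᵐ r ∂volume.restrict (Set.Ioi (0 : ℝ)), r ≠ 1 := Measure.ae_ne _ 1
  filter_upwards [hne, ae_restrict_mem measurableSet_Ioi] with r hr₁ (hr₀ : 0 < r)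
  rcases hr₁.lt_or_gt with hr | hr
  · have habs : |r| ≤ 1 := by rw [abs_of_pos hr₀]; exact hr.le
    simpa only [Set.indicator_of_mem (Set.mem_Iic.2 hr.le), one_smul] using
      (tendsto_F_one habs (abs_chernoffFactor_lt_one hr₀ hr₁)).smul_const (f r)
  · simpa only [Set.indicator_of_notMem (Set.notMem_Iic.2 hr), zero_smul] using
      (tendsto_F_zero hr).smul_const (f r)

lemma tendsto_setIntegral_F_smul {f : ℝ → E} {N : ℕ}
    (hf : IntegrableOn (fun r => chernoffWeight r ^ N • f r) (Set.Ioi 0)) :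
    Tendsto (fun n => ∫ r in Set.Ioi 0, F n r • f r) atTop (nhds (∫ u in Set.Icc 0 1, f u)) := by
  have hmeas : AEStronglyMeasurable f (volume.restrict (Set.Ioi 0)) :=
    aestronglyMeasurable_of_smul (continuous_chernoffWeight.pow N).aestronglyMeasurable
      (.of_forall fun r => (pow_pos (chernoffWeight_pos r) N).ne') hf.aestronglyMeasurable
  have hlim : ∫ u in Set.Icc 0 1, f u = ∫ r in Set.Ioi 0, (Set.Iic 1).indicator f r := by
    rw [setIntegral_indicator measurableSet_Iic, Set.Ioi_inter_Iic, integral_Icc_eq_integral_Ioc]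
  rw [hlim]
  refine tendsto_integral_filter_of_dominated_convergence _
    (.of_forall fun n => (continuous_F n).aestronglyMeasurable.smul hmeas) ?_ hf.norm
    (ae_tendsto_F_smul_indicator f)
  filter_upwards [eventually_ge_atTop N] with n hn
  filter_upwards [ae_restrict_mem measurableSet_Ioi] with r (hr : 0 < r)
  rw [norm_smul, norm_smul, Real.norm_of_nonneg (pow_pos (chernoffWeight_pos r) N).le]
  gcongr
  exact abs_F_le_chernoffWeight_pow hn hr.le

end TestFunctions

theorem poisson_tail_limits_and_weak_convergence_to_uniform_general :
    (∀ r : ℝ, |r| ≤ 1 → |chernoffFactor r| < 1 → Tendsto (fun n => F n r) atTop (nhds 1)) ∧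
    (∀ r : ℝ, 1 < r → Tendsto (fun n => F n r) atTop (nhds 0)) ∧
    (∀ {E : Type*} [NormedAddCommGroup E] [NormedSpace ℝ E] (f : ℝ → E) (N : ℕ),
      IntegrableOn (fun r => chernoffWeight r ^ N • f r) (Set.Ioi 0) →
      Tendsto (fun n => ∫ r in Set.Ioi 0, F n r • f r) atTop
        (nhds (∫ u in Set.Icc 0 1, f u))) :=
  ⟨fun _ => tendsto_F_one, fun _ => tendsto_F_zero, fun _ _ => tendsto_setIntegral_F_smul⟩

/-- Pointwise limits of `F n`: `F n r → 1` for `0 < r < 1` and `F n r → 0` for `r > 1`;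
consequently the laws of `Rₙ/n` (with densities `F n` on `(0,∞)`) converge weakly to the
uniform distribution on `[0,1]`. -/
theorem poisson_tail_limits_and_weak_convergence_to_uniform :
    (∀ r : ℝ, 0 < r → r < 1 → Tendsto (fun n : ℕ => F n r) atTop (nhds 1)) ∧
    (∀ r : ℝ, 1 < r → Tendsto (fun n : ℕ => F n r) atTop (nhds 0)) ∧
    (∀ f : ℝ → ℝ, Continuous f → (∃ C, ∀ x, |f x| ≤ C) →
      Tendsto (fun n : ℕ => ∫ r in Set.Ioi (0 : ℝ), f r * F n r) atTop
        (nhds (∫ u in Set.Icc (0 : ℝ) 1, f u))) := by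
  obtain ⟨hone, hzero, hweak⟩ := poisson_tail_limits_and_weak_convergence_to_uniform_general
  refine ⟨fun r hr₀ hr₁ => hone r (abs_le.2 ⟨by linarith, hr₁.le⟩)
    (abs_chernoffFactor_lt_one hr₀ hr₁.ne), hzero, fun f hf ⟨C, hC⟩ => ?_⟩
  have hint : IntegrableOn (fun r => chernoffWeight r ^ 1 • f r) (Set.Ioi 0) := by
    simp only [pow_one]
    exact integrableOn_chernoffWeight.smul_bdd C hf.aestronglyMeasurable (.of_forall hC)
  simpa only [smul_eq_mul, mul_comm] using hweak f 1 hint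

end
end

section
/- For every integer n ≥ 1, ∫₀^∞ ∫₀^∞ e^{−(x+y)} (x − y)² Σ_{a=0}^{n−1} (xy)^a / (a!)² dx dy = n(n+1). Equivalently, if (X,Y) has joint probability density (1/n) e^{−(x+y)} Σ_{a=0}^{n−1} (xy)^a/(a! a!) on (0,∞)², then E[(X − Y)²] = n + 1, and hence (X − Y)/n → 0 in L² as n → ∞. -/
open MeasureTheory Filter

noncomputable section

/-!
The weight `e^{-(x+y)} (xy)^a / (a!)²` is the joint density of two independent Gamma(`a + 1`, `1`)
variables. Their difference has mean zero and variance `2(a + 1)`, twice the variance of one of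
them; summing over `a < n` gives `n(n + 1)`.
-/

open ProbabilityTheory Set

section SecondMoment

variable {Ω Ω' : Type*} {mΩ : MeasurableSpace Ω} {mΩ' : MeasurableSpace Ω'}
  {μ : Measure Ω} {ν : Measure Ω'} {X : Ω → ℝ} {Y : Ω' → ℝ}

lemma integrable_sub_const_sq [IsFiniteMeasure μ] (hX : MemLp X 2 μ) (c : ℝ) :
    Integrable (fun ω ↦ (X ω - c) ^ 2) μ :=
  (hX.sub (memLp_const c)).integrable_sq

lemma integrable_const_sub_sq [IsFiniteMeasure μ] (hX : MemLp X 2 μ) (c : ℝ) :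
    Integrable (fun ω ↦ (c - X ω) ^ 2) μ :=
  ((memLp_const c).sub hX).integrable_sq

lemma integrable_integral_sub_sq [IsFiniteMeasure μ] [IsFiniteMeasure ν] (hX : MemLp X 2 μ)
    (hY : MemLp Y 2 ν) : Integrable (fun ω ↦ ∫ ω', (X ω - Y ω') ^ 2 ∂ν) μ :=
  ((hX.comp_fst ν).sub (hY.comp_snd μ)).integrable_sq.integral_prod_left

variable [IsProbabilityMeasure μ] [IsProbabilityMeasure ν]

lemma integral_sub_const_sq (hX : MemLp X 2 μ) (c : ℝ) :
    ∫ ω, (X ω - c) ^ 2 ∂μ = Var[X; μ] + (μ[X] - c) ^ 2 := by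
  have hmean : ∫ ω, (X ω - c) ∂μ = μ[X] - c := by
    rw [integral_sub (hX.integrable one_le_two) (integrable_const c)]
    simp only [integral_const, probReal_univ, one_smul]
  have hvar := variance_eq_sub (X := fun ω ↦ X ω - c) (hX.sub (memLp_const c))
  simp only [variance_sub_const hX.aestronglyMeasurable, Pi.pow_apply, hmean] at hvar
  linarith

lemma integral_const_sub_sq (hY : MemLp Y 2 ν) (c : ℝ) :
    ∫ ω, (c - Y ω) ^ 2 ∂ν = Var[Y; ν] + (c - ν[Y]) ^ 2 := by
  simp only [sub_sq_comm c, integral_sub_const_sq hY]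

lemma integral_integral_sub_sq (hX : MemLp X 2 μ) (hY : MemLp Y 2 ν) :
    ∫ ω, ∫ ω', (X ω - Y ω') ^ 2 ∂ν ∂μ = Var[X; μ] + Var[Y; ν] + (μ[X] - ν[Y]) ^ 2 := by
  simp only [integral_const_sub_sq hY]
  rw [integral_add (integrable_const _) (integrable_sub_const_sq hX _), integral_sub_const_sq hX,
    integral_const, probReal_univ, one_smul]
  ring

end SecondMoment

lemma integral_integral_finsetSum {ι α β E : Type*} {mα : MeasurableSpace α}
    {mβ : MeasurableSpace β} {μ : Measure α} {ν : Measure β} [NormedAddCommGroup E]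
    [NormedSpace ℝ E] (s : Finset ι) {f : ι → α → β → E}
    (hf : ∀ i ∈ s, ∀ᵐ x ∂μ, Integrable (f i x) ν)
    (hf' : ∀ i ∈ s, Integrable (fun x ↦ ∫ y, f i x y ∂ν) μ) :
    ∫ x, ∫ y, ∑ i ∈ s, f i x y ∂ν ∂μ = ∑ i ∈ s, ∫ x, ∫ y, f i x y ∂ν ∂μ := by
  rw [← integral_finsetSum s hf']
  refine integral_congr_ae ?_
  filter_upwards [(eventually_all_finset s).2 hf] with x hx
  exact integral_finsetSum s hx

section Gamma

variable {a r : ℝ}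

lemma measurable_gammaPDF (a r : ℝ) : Measurable (gammaPDF a r) :=
  (measurable_gammaPDFReal a r).ennreal_ofReal

lemma gammaMeasure_eq_withDensity_restrict_Ioi (a r : ℝ) :
    gammaMeasure a r = (volume.restrict (Ioi 0)).withDensity (gammaPDF a r) := by
  have hsupp : (Ici 0).indicator (gammaPDF a r) = gammaPDF a r :=
    indicator_eq_self.2 fun x hx ↦ not_lt.1 fun hneg ↦ hx (gammaPDF_of_neg hneg)
  rw [restrict_Ioi_eq_restrict_Ici, ← withDensity_indicator measurableSet_Ici, hsupp, gammaMeasure]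

variable {E : Type*} [NormedAddCommGroup E] [NormedSpace ℝ E]

lemma integrable_gammaMeasure_iff {f : ℝ → E} (ha : 0 < a) (hr : 0 < r) :
    Integrable f (gammaMeasure a r) ↔
      IntegrableOn (fun x ↦ gammaPDFReal a r x • f x) (Ioi 0) := by
  rw [gammaMeasure_eq_withDensity_restrict_Ioi, integrable_withDensity_iff_integrable_smul'
    (measurable_gammaPDF a r) (ae_of_all _ fun _ ↦ ENNReal.ofReal_lt_top)]
  simp only [gammaPDF, ENNReal.toReal_ofReal (gammaPDFReal_nonneg ha hr _), IntegrableOn]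

lemma integral_gammaMeasure (ha : 0 < a) (hr : 0 < r) (f : ℝ → E) :
    ∫ x, f x ∂gammaMeasure a r = ∫ x in Ioi 0, gammaPDFReal a r x • f x := by
  rw [gammaMeasure_eq_withDensity_restrict_Ioi, integral_withDensity_eq_integral_toReal_smul
    (measurable_gammaPDF a r) (ae_of_all _ fun _ ↦ ENNReal.ofReal_lt_top)]
  simp only [gammaPDF, ENNReal.toReal_ofReal (gammaPDFReal_nonneg ha hr _)]

lemma gammaPDFReal_mul_rpow {x : ℝ} (hx : 0 < x) (a r p : ℝ) :
    gammaPDFReal a r x * x ^ p =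
      r ^ a / Real.Gamma a * (x ^ (a + p - 1) * Real.exp (-(r * x))) := by
  rw [gammaPDFReal, if_pos hx.le, show a + p - 1 = a - 1 + p by ring, Real.rpow_add hx]
  ring

lemma integrable_rpow_gammaMeasure {p : ℝ} (ha : 0 < a) (hr : 0 < r) (hp : 0 < a + p) :
    Integrable (fun x ↦ x ^ p) (gammaMeasure a r) := by
  have hGamma : IntegrableOn (fun x : ℝ ↦ x ^ (a + p - 1) * Real.exp (-(r * x))) (Ioi 0) := by
    simpa using integrableOn_rpow_mul_exp_neg_mul_rpow (s := a + p - 1) (by linarith) one_pos hr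
  rw [integrable_gammaMeasure_iff ha hr]
  exact IntegrableOn.congr_fun (hGamma.const_mul (r ^ a / Real.Gamma a))
    (fun x hx ↦ (gammaPDFReal_mul_rpow hx a r p).symm) measurableSet_Ioi

lemma integral_rpow_gammaMeasure {p : ℝ} (ha : 0 < a) (hr : 0 < r) (hp : 0 < a + p) :
    ∫ x, x ^ p ∂gammaMeasure a r = Real.Gamma (a + p) / (Real.Gamma a * r ^ p) := by
  calc ∫ x, x ^ p ∂gammaMeasure a r
      = ∫ x in Ioi 0, r ^ a / Real.Gamma a * (x ^ (a + p - 1) * Real.exp (-(r * x))) := by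
        rw [integral_gammaMeasure ha hr]
        exact setIntegral_congr_fun measurableSet_Ioi fun x hx ↦ gammaPDFReal_mul_rpow hx a r p
    _ = r ^ a / Real.Gamma a * ((1 / r) ^ (a + p) * Real.Gamma (a + p)) := by
        rw [integral_const_mul, Real.integral_rpow_mul_exp_neg_mul_Ioi hp hr]
    _ = Real.Gamma (a + p) / (Real.Gamma a * r ^ p) := by
        rw [one_div, Real.inv_rpow hr.le, Real.rpow_add hr]
        field_simp

lemma integral_id_gammaMeasure (ha : 0 < a) (hr : 0 < r) :
    ∫ x, x ∂gammaMeasure a r = a / r := by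
  have h := integral_rpow_gammaMeasure (p := 1) ha hr (by linarith)
  have hΓ := (Real.Gamma_pos_of_pos ha).ne'
  simp only [Real.rpow_one, Real.Gamma_add_one ha.ne'] at h
  rw [h]
  field_simp

lemma integral_sq_gammaMeasure (ha : 0 < a) (hr : 0 < r) :
    ∫ x, x ^ 2 ∂gammaMeasure a r = a * (a + 1) / r ^ 2 := by
  have h := integral_rpow_gammaMeasure (p := 2) ha hr (by linarith)
  have hΓ := (Real.Gamma_pos_of_pos ha).ne'
  rw [show a + 2 = a + 1 + 1 by ring, Real.Gamma_add_one (by positivity),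
    Real.Gamma_add_one ha.ne'] at h
  simp only [Real.rpow_two] at h
  rw [h]
  field_simp

lemma memLp_two_id_gammaMeasure (ha : 0 < a) (hr : 0 < r) :
    MemLp (fun x ↦ x) 2 (gammaMeasure a r) := by
  rw [memLp_two_iff_integrable_sq (by fun_prop)]
  simpa using integrable_rpow_gammaMeasure (p := 2) ha hr (by linarith)

lemma variance_id_gammaMeasure (ha : 0 < a) (hr : 0 < r) :
    Var[fun x ↦ x; gammaMeasure a r] = a / r ^ 2 := by
  have := isProbabilityMeasure_gammaMeasure ha hr
  rw [variance_eq_sub (memLp_two_id_gammaMeasure ha hr), integral_id_gammaMeasure ha hr]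
  simp only [Pi.pow_apply, integral_sq_gammaMeasure ha hr]
  field_simp
  ring

lemma integral_integral_sub_sq_gammaMeasure {b q : ℝ} (ha : 0 < a) (hr : 0 < r) (hb : 0 < b)
    (hq : 0 < q) :
    ∫ x, ∫ y, (x - y) ^ 2 ∂gammaMeasure b q ∂gammaMeasure a r =
      a / r ^ 2 + b / q ^ 2 + (a / r - b / q) ^ 2 := by
  have := isProbabilityMeasure_gammaMeasure ha hr
  have := isProbabilityMeasure_gammaMeasure hb hq
  rw [integral_integral_sub_sq (memLp_two_id_gammaMeasure ha hr)
    (memLp_two_id_gammaMeasure hb hq), variance_id_gammaMeasure ha hr,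
    variance_id_gammaMeasure hb hq, integral_id_gammaMeasure ha hr,
    integral_id_gammaMeasure hb hq]

lemma gammaPDFReal_natCast_add_one {x : ℝ} (hx : 0 ≤ x) (k : ℕ) (r : ℝ) :
    gammaPDFReal (k + 1) r x = r ^ (k + 1) / k.factorial * x ^ k * Real.exp (-(r * x)) := by
  rw [gammaPDFReal, if_pos hx, Real.Gamma_nat_eq_factorial, add_sub_cancel_right,
    Real.rpow_natCast, ← Nat.cast_succ, Real.rpow_natCast]

lemma integral_integral_sum_gammaPDFReal_mul_sub_sq {ι : Type*} (s : Finset ι)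
    {a b r q : ι → ℝ} (ha : ∀ i ∈ s, 0 < a i) (hb : ∀ i ∈ s, 0 < b i) (hr : ∀ i ∈ s, 0 < r i)
    (hq : ∀ i ∈ s, 0 < q i) :
    ∫ x in Ioi 0, ∫ y in Ioi 0, ∑ i ∈ s,
        gammaPDFReal (a i) (r i) x * (gammaPDFReal (b i) (q i) y * (x - y) ^ 2) =
      ∑ i ∈ s, (a i / r i ^ 2 + b i / q i ^ 2 + (a i / r i - b i / q i) ^ 2) := by
  have inner i (hi : i ∈ s) (x : ℝ) : ∫ y in Ioi 0,
        gammaPDFReal (a i) (r i) x * (gammaPDFReal (b i) (q i) y * (x - y) ^ 2) =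
      gammaPDFReal (a i) (r i) x • ∫ y, (x - y) ^ 2 ∂gammaMeasure (b i) (q i) := by
    simp only [integral_const_mul, integral_gammaMeasure (hb i hi) (hq i hi), smul_eq_mul]
  rw [integral_integral_finsetSum]
  · refine Finset.sum_congr rfl fun i hi ↦ ?_
    simp only [inner i hi]
    rw [← integral_gammaMeasure (ha i hi) (hr i hi),
      integral_integral_sub_sq_gammaMeasure (ha i hi) (hr i hi) (hb i hi) (hq i hi)]
  · refine fun i hi ↦ ae_of_all _ fun x ↦ Integrable.const_mul ?_ _
    have := isProbabilityMeasure_gammaMeasure (hb i hi) (hq i hi)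
    exact (integrable_gammaMeasure_iff (hb i hi) (hq i hi)).1
      (integrable_const_sub_sq (memLp_two_id_gammaMeasure (hb i hi) (hq i hi)) x)
  · intro i hi
    have := isProbabilityMeasure_gammaMeasure (ha i hi) (hr i hi)
    have := isProbabilityMeasure_gammaMeasure (hb i hi) (hq i hi)
    simp only [inner i hi]
    exact (integrable_gammaMeasure_iff (ha i hi) (hr i hi)).1
      (integrable_integral_sub_sq (memLp_two_id_gammaMeasure (ha i hi) (hr i hi))
        (memLp_two_id_gammaMeasure (hb i hi) (hq i hi)))

end Gamma

lemma exp_neg_add_mul_mul_sum_eq_sum_gammaPDFReal {x y : ℝ} (hx : 0 ≤ x) (hy : 0 ≤ y) (c : ℝ)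
    (s : Finset ℕ) :
    Real.exp (-(x + y)) * c * ∑ a ∈ s, (x * y) ^ a / (a.factorial : ℝ) ^ 2 =
      ∑ a ∈ s, gammaPDFReal (a + 1) 1 x * (gammaPDFReal (a + 1) 1 y * c) := by
  simp only [gammaPDFReal_natCast_add_one hx, gammaPDFReal_natCast_add_one hy, Finset.mul_sum,
    one_pow, one_mul, neg_add, Real.exp_add, mul_pow]
  refine Finset.sum_congr rfl fun a _ ↦ ?_
  ring

lemma sum_range_two_mul_add_one (n : ℕ) : ∑ a ∈ Finset.range n, 2 * (a + 1) = n * (n + 1) := by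
  have gauss := Finset.sum_range_id_mul_two (n + 1)
  rw [Finset.sum_range_succ', add_zero, Nat.add_sub_cancel] at gauss
  rw [← Finset.mul_sum]
  linarith

/-- For the joint density `(1/n) e^{-(x+y)} ∑_{a<n} (xy)^a/(a!)²` on `(0,∞)²` (two coupled
radial variables of a product of Ginibre matrices with equal sign exponents),
`E[(X-Y)²] = n+1`; equivalently
`∫∫ e^{-(x+y)} (x-y)² ∑_{a<n} (xy)^a/(a!)² dx dy = n(n+1)`. -/
theorem ginibre_radial_same_sign_second_moment (n : ℕ) (hn : 1 ≤ n) :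
    (∫ x in Set.Ioi (0 : ℝ), ∫ y in Set.Ioi (0 : ℝ),
        Real.exp (-(x + y)) * (x - y) ^ 2 *
          ∑ a ∈ Finset.range n, (x * y) ^ a / ((a.factorial : ℝ) ^ 2)) =
      n * (n + 1) := by
  have hshape (a : ℕ) (_ : a ∈ Finset.range n) : (0 : ℝ) < a + 1 := by positivity
  have hrate (a : ℕ) (_ : a ∈ Finset.range n) : (0 : ℝ) < 1 := one_pos
  calc
    _ = ∫ x in Ioi 0, ∫ y in Ioi 0, ∑ a ∈ Finset.range n,
          gammaPDFReal (a + 1) 1 x * (gammaPDFReal (a + 1) 1 y * (x - y) ^ 2) :=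
      setIntegral_congr_fun measurableSet_Ioi fun x hx ↦
        setIntegral_congr_fun measurableSet_Ioi fun y hy ↦
          exp_neg_add_mul_mul_sum_eq_sum_gammaPDFReal (le_of_lt hx) (le_of_lt hy) _ _
    _ = ∑ a ∈ Finset.range n, (2 * (a + 1) : ℝ) := by
      rw [integral_integral_sum_gammaPDFReal_mul_sub_sq _ hshape hshape hrate hrate]
      refine Finset.sum_congr rfl fun a _ ↦ ?_
      ring
    _ = n * (n + 1) := mod_cast sum_range_two_mul_add_one n

end
end
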